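/- Assume (A(t), B(t)) is totally controllable on [0,1], that Φ₁₂(1,0) is invertible, and that C(t)D(t)C(t)ᵀ = B(t)B(t)ᵀ for all t ∈ [0,1]. Let Σ₀ and Σ₁ be symmetric positive definite. Then the unique symmetric matrix Π₀ ≺ −Φ₁₂(1,0)⁻¹Φ₁₁(1,0) with f(Π₀) = Σ₁ is Π₀ = −Φ₁₂(1,0)⁻¹Φ₁₁(1,0) + (1/2)Σ₀⁻¹ − Σ₀^{−1/2}((1/4)Iₙ + Σ₀^{1/2}Φ₁₂(1,0)⁻¹Σ₁Φ₁₂(1,0)⁻ᵀΣ₀^{1/2})^{1/2}Σ₀^{−1/2}, where X^{1/2} denotes the unique positive semidefinite square root of a positive semidefinite matrix X. -/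

import Mathlib

/-!
Write `F = Φ₁₂(1,0)`, `L = -F⁻¹ Φ₁₁(1,0)`, `X(t) = Φ₁₁(t,0) + Φ₁₂(t,0) P` and `G = L - P`.

Two facts about the Hamiltonian system `X' = A X - R Y`, `Y' = -Q X - Aᵀ Y` with `R = B Bᵀ ⪰ 0` and
`Q ⪰ 0` drive the argument: the Wronskian `X₁ᵀ Y₂ - Y₁ᵀ X₂` of two solutions is constant, and the
pairing `⟨x, y⟩` of state and costate decreases along every solution. The first makes `L` symmetric,
since the solution starting at `(1, L)` has state `0` at time `1`. Both together exclude conjugate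
points when `G ≻ 0`: `X(t)` is invertible on `[0,1]`.

Since `C D Cᵀ = R`, the integrand in `f(P)` is `X⁻¹ R X⁻ᵀ = -(X⁻¹ Φ₁₂)'`, so the integral is
`-X(1)⁻¹ F`. As `X(1) = -F G`, this gives `f(P) = F (G Σ₀ G + G) Fᵀ`. With
`H = Σ₀^{1/2} G Σ₀^{1/2}`, the equation `f(P) = Σ₁` becomes
`(H + 1/2)² = 1/4 + Σ₀^{1/2} F⁻¹ Σ₁ F⁻ᵀ Σ₀^{1/2} = K²`. For `H ≻ 0` uniqueness of positive
semidefinite square roots forces `H = K - 1/2`, and this matrix is positive definite because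
`K² ≻ 1/4`.
-/

open Matrix

/-- `IsSTM F Φ`: `Φ` is the state transition matrix of `F`, i.e. for each fixed `s`,
`t ↦ Φ t s` solves `X' = F t * X`, `X s = 1` (derivatives taken entrywise). -/
def IsSTM {ι : Type*} [Fintype ι] [DecidableEq ι] (F : ℝ → Matrix ι ι ℝ)
    (Φ : ℝ → ℝ → Matrix ι ι ℝ) : Prop :=
  (∀ s : ℝ, Φ s s = 1) ∧
  ∀ (s t : ℝ) (i j : ι), HasDerivAt (fun t' : ℝ => Φ t' s i j) ((F t * Φ t s) i j) t

/-- `IsCtrbMatSeq A B Γ`: `Γ 0 = B` and `Γ k = -A Γ (k-1) + Γ' (k-1)` for `1 ≤ k ≤ n`,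
i.e. the derivative of each entry of `Γ k` is the corresponding entry of `Γ (k+1) + A * Γ k`,
for `k < n`. -/
def IsCtrbMatSeq {n p : ℕ} (A : ℝ → Matrix (Fin n) (Fin n) ℝ)
    (B : ℝ → Matrix (Fin n) (Fin p) ℝ) (Γ : ℕ → ℝ → Matrix (Fin n) (Fin p) ℝ) : Prop :=
  Γ 0 = B ∧
  ∀ k < n, ∀ (t : ℝ) (i : Fin n) (j : Fin p),
    HasDerivAt (fun τ : ℝ => Γ k τ i j) ((Γ (k + 1) t + A t * Γ k t) i j) t

/-- The controllability matrix `Θₙ(t) = [Γ₀(t) Γ₁(t) ⋯ Γ_{n−1}(t)]`. -/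
def ctrbMat {n p : ℕ} (Γ : ℕ → ℝ → Matrix (Fin n) (Fin p) ℝ) (t : ℝ) :
    Matrix (Fin n) (Fin n × Fin p) ℝ :=
  Matrix.of fun i kj => Γ (kj.1 : ℕ) t i kj.2

/-- Total controllability of `(A(t), B(t))` on `[0,1]`. -/
def TotallyControllable {n p : ℕ} (Γ : ℕ → ℝ → Matrix (Fin n) (Fin p) ℝ) : Prop :=
  ∀ t₀ t₁ : ℝ, 0 ≤ t₀ → t₀ < t₁ → t₁ ≤ 1 →
    ∃ t ∈ Set.Ioo t₀ t₁, (ctrbMat Γ t).rank = n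

noncomputable def steerMap {n q : ℕ}
    (Φ : ℝ → ℝ → Matrix (Fin n ⊕ Fin n) (Fin n ⊕ Fin n) ℝ)
    (C : ℝ → Matrix (Fin n) (Fin q) ℝ) (D : ℝ → Matrix (Fin q) (Fin q) ℝ)
    (Sig0 : Matrix (Fin n) (Fin n) ℝ) (P : Matrix (Fin n) (Fin n) ℝ) :
    Matrix (Fin n) (Fin n) ℝ :=
  ((Φ 1 0).toBlocks₁₁ + (Φ 1 0).toBlocks₁₂ * P) *
    (Sig0 + Matrix.of fun i j => ∫ s in (0:ℝ)..1,
      ((((Φ s 0).toBlocks₁₁ + (Φ s 0).toBlocks₁₂ * P)⁻¹ * (C s * D s * (C s)ᵀ) *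
        ((((Φ s 0).toBlocks₁₁ + (Φ s 0).toBlocks₁₂ * P)⁻¹)ᵀ)) i j)) *
  ((Φ 1 0).toBlocks₁₁ + (Φ 1 0).toBlocks₁₂ * P)ᵀ

section Differentiation

variable {ι κ ν : Type*} {t : ℝ}

theorem hasDerivAt_matrix [Finite ι] [Finite κ] {X : ℝ → Matrix ι κ ℝ} {X' : Matrix ι κ ℝ} :
    HasDerivAt X X' t ↔ ∀ i j, HasDerivAt (fun s => X s i j) (X' i j) t := by
  cases nonempty_fintype ι
  cases nonempty_fintype κ
  exact hasDerivAt_pi.trans <| forall_congr' fun _ => hasDerivAt_pi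

theorem hasDerivAt_matrix_transpose [Finite ι] [Finite κ] {X : ℝ → Matrix ι κ ℝ}
    {X' : Matrix ι κ ℝ} (hX : HasDerivAt X X' t) : HasDerivAt (fun s => (X s)ᵀ) X'ᵀ t :=
  hasDerivAt_matrix.2 fun i j => hasDerivAt_matrix.1 hX j i

theorem hasDerivAt_matrix_mul [Finite ι] [Fintype κ] [Finite ν] {X : ℝ → Matrix ι κ ℝ}
    {Y : ℝ → Matrix κ ν ℝ} {X' : Matrix ι κ ℝ} {Y' : Matrix κ ν ℝ}
    (hX : HasDerivAt X X' t) (hY : HasDerivAt Y Y' t) :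
    HasDerivAt (fun s => X s * Y s) (X' * Y t + X t * Y') t := by
  refine hasDerivAt_matrix.2 fun i j => ?_
  simp only [Matrix.mul_apply, Matrix.add_apply, ← Finset.sum_add_distrib]
  exact HasDerivAt.fun_sum fun k _ =>
    (hasDerivAt_matrix.1 hX i k).fun_mul (hasDerivAt_matrix.1 hY k j)

theorem hasDerivAt_matrix_inv [Fintype κ] [DecidableEq κ] {X : ℝ → Matrix κ κ ℝ} {X' : Matrix κ κ ℝ}
    (hX : HasDerivAt X X' t) (hu : IsUnit (X t)) :
    HasDerivAt (fun s => (X s)⁻¹) (-((X t)⁻¹ * X' * (X t)⁻¹)) t := by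
  obtain ⟨u, hu⟩ := hu
  simp only [nonsing_inv_eq_ringInverse, ← hu, Ring.inverse_unit]
  open scoped Matrix.Norms.Operator in
  exact ((hu ▸ hasFDerivAt_ringInverse (𝕜 := ℝ) u).comp_hasDerivAt t hX).congr_deriv (by simp)

theorem hasDerivAt_dotProduct_mulVec [Fintype ι] [Fintype κ] {X : ℝ → Matrix ι κ ℝ}
    {X' : Matrix ι κ ℝ} (hX : HasDerivAt X X' t) (u : ι → ℝ) (v : κ → ℝ) :
    HasDerivAt (fun s => u ⬝ᵥ X s *ᵥ v) (u ⬝ᵥ X' *ᵥ v) t :=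
  HasDerivAt.fun_sum fun i _ => (HasDerivAt.fun_sum fun j _ =>
    (hasDerivAt_matrix.1 hX i j).mul_const (v j)).const_mul (u i)

end Differentiation

section Hamiltonian

open scoped Matrix.Norms.Elementwise

variable {ι κ ν : Type*} [Fintype ι]

/-- `(X, Y)` is a matrix solution, with state `X` and costate `Y`, of the linear Hamiltonian system
`X' = A X - R Y`, `Y' = -Q X - Aᵀ Y`, where `R` stands for `B Bᵀ`. Each column is a vector solution,
and the number of columns is arbitrary. -/
structure IsHamiltonianSolution (A R Q : ℝ → Matrix ι ι ℝ) (X Y : ℝ → Matrix ι κ ℝ) : Prop where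
  hasDerivAt_state : ∀ t, HasDerivAt X (A t * X t - R t * Y t) t
  hasDerivAt_costate : ∀ t, HasDerivAt Y (-(Q t * X t) - (A t)ᵀ * Y t) t

/-- The Wronskian `X₁ᵀ Y₂ - Y₁ᵀ X₂` of two state-costate pairs. That of `(X, Y)` with itself
vanishes exactly when `Xᵀ Y` is symmetric. -/
def wronskian (X₁ Y₁ : ℝ → Matrix ι κ ℝ) (X₂ Y₂ : ℝ → Matrix ι ν ℝ) (t : ℝ) : Matrix κ ν ℝ :=
  (X₁ t)ᵀ * Y₂ t - (Y₁ t)ᵀ * X₂ t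

namespace IsHamiltonianSolution

variable {A R Q : ℝ → Matrix ι ι ℝ} {X Y X₁ Y₁ : ℝ → Matrix ι κ ℝ}

theorem add_mul [Finite κ] [Fintype ν] {X₂ Y₂ : ℝ → Matrix ι ν ℝ}
    (h₁ : IsHamiltonianSolution A R Q X₁ Y₁) (h₂ : IsHamiltonianSolution A R Q X₂ Y₂)
    (P : Matrix ν κ ℝ) :
    IsHamiltonianSolution A R Q (fun t => X₁ t + X₂ t * P) (fun t => Y₁ t + Y₂ t * P) where
  hasDerivAt_state t := by
    cases nonempty_fintype κ
    have hP := hasDerivAt_matrix_mul (h₂.hasDerivAt_state t) (hasDerivAt_const t P)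
    refine ((h₁.hasDerivAt_state t).fun_add hP).congr_deriv ?_
    simp only [Matrix.mul_add, Matrix.sub_mul, Matrix.mul_assoc, Matrix.mul_zero]
    abel
  hasDerivAt_costate t := by
    cases nonempty_fintype κ
    have hP := hasDerivAt_matrix_mul (h₂.hasDerivAt_costate t) (hasDerivAt_const t P)
    refine ((h₁.hasDerivAt_costate t).fun_add hP).congr_deriv ?_
    simp only [Matrix.mul_add, Matrix.sub_mul, Matrix.neg_mul, Matrix.mul_assoc, Matrix.mul_zero]
    abel

theorem wronskian_eq [Finite κ] [Finite ν] {X₂ Y₂ : ℝ → Matrix ι ν ℝ} (hR : ∀ t, (R t).IsSymm)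
    (hQ : ∀ t, (Q t).IsSymm) (h₁ : IsHamiltonianSolution A R Q X₁ Y₁)
    (h₂ : IsHamiltonianSolution A R Q X₂ Y₂) (s t : ℝ) :
    wronskian X₁ Y₁ X₂ Y₂ s = wronskian X₁ Y₁ X₂ Y₂ t := by
  cases nonempty_fintype κ
  cases nonempty_fintype ν
  have hW (t : ℝ) : HasDerivAt (wronskian X₁ Y₁ X₂ Y₂) 0 t := by
    refine ((hasDerivAt_matrix_mul (hasDerivAt_matrix_transpose (h₁.hasDerivAt_state t))
      (h₂.hasDerivAt_costate t)).fun_sub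
      (hasDerivAt_matrix_mul (hasDerivAt_matrix_transpose (h₁.hasDerivAt_costate t))
        (h₂.hasDerivAt_state t))).congr_deriv ?_
    simp only [transpose_sub, transpose_neg, transpose_mul, transpose_transpose, (hR t).eq,
      (hQ t).eq, Matrix.sub_mul, Matrix.mul_sub, Matrix.neg_mul, Matrix.mul_neg, Matrix.mul_assoc]
    abel
  exact is_const_of_deriv_eq_zero (fun t => (hW t).differentiableAt) (fun t => (hW t).deriv) s t

theorem hasDerivAt_transpose_mul [Finite κ] (hR : ∀ t, (R t).IsSymm)
    (h : IsHamiltonianSolution A R Q X Y) (t : ℝ) :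
    HasDerivAt (fun t => (X t)ᵀ * Y t) (-((Y t)ᵀ * R t * Y t + (X t)ᵀ * Q t * X t)) t := by
  cases nonempty_fintype κ
  refine (hasDerivAt_matrix_mul (hasDerivAt_matrix_transpose (h.hasDerivAt_state t))
    (h.hasDerivAt_costate t)).congr_deriv ?_
  simp only [transpose_sub, transpose_mul, (hR t).eq, Matrix.sub_mul, Matrix.mul_sub,
    Matrix.mul_neg, Matrix.mul_assoc]
  abel

theorem antitone_state_dotProduct_costate [Fintype κ] (hR : ∀ t, (R t).PosSemidef)
    (hQ : ∀ t, (Q t).PosSemidef) (h : IsHamiltonianSolution A R Q X Y) (v : κ → ℝ) :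
    Antitone fun t => X t *ᵥ v ⬝ᵥ Y t *ᵥ v := by
  have pairing (t : ℝ) : X t *ᵥ v ⬝ᵥ Y t *ᵥ v = v ⬝ᵥ ((X t)ᵀ * Y t) *ᵥ v := by
    rw [← mulVec_mulVec, dotProduct_mulVec v, vecMul_transpose]
  have hd (t : ℝ) := hasDerivAt_dotProduct_mulVec
    (h.hasDerivAt_transpose_mul (fun t => (hR t).isHermitian) t) v v
  simp only [pairing]
  refine antitone_of_deriv_nonpos (fun t => (hd t).differentiableAt) fun t => ?_
  have hpsd := ((hR t).conjTranspose_mul_mul_same (Y t)).add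
    ((hQ t).conjTranspose_mul_mul_same (X t))
  rw [(hd t).deriv, neg_mulVec, dotProduct_neg, neg_nonpos]
  simpa using hpsd.dotProduct_mulVec_nonneg v

variable [DecidableEq ι] {X Y : ℝ → Matrix ι ι ℝ} {Z V : ℝ → Matrix ι κ ℝ} {a b t : ℝ}

/- If `X(t) v = 0`, put `u = G v`. Monotonicity of `⟨Z u, V u⟩` on `[a, t]` and of the pairing of
`(X + Z G) v` with `(Y + V G) v` on `[t, b]` give `⟨Z(t) u, Y(t) v⟩ ≥ 0`, while the Wronskian
evaluates this number to `-⟨v, G v⟩ < 0`. -/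
theorem isUnit_state {Z V : ℝ → Matrix ι ι ℝ} {G : Matrix ι ι ℝ} (hR : ∀ t, (R t).PosSemidef)
    (hQ : ∀ t, (Q t).PosSemidef) (h : IsHamiltonianSolution A R Q X Y)
    (hZ : IsHamiltonianSolution A R Q Z V) (hZa : Z a = 0) (hW : wronskian X Y Z V a = 1)
    (hG : G.PosDef) (hb : X b + Z b * G = 0) (ht : t ∈ Set.Icc a b) : IsUnit (X t) := by
  rw [Matrix.isUnit_iff_isUnit_det, isUnit_iff_ne_zero]
  intro hdet
  obtain ⟨v, hv, hXv⟩ := exists_mulVec_eq_zero_iff.2 hdet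
  have hZV : Z t *ᵥ (G *ᵥ v) ⬝ᵥ V t *ᵥ (G *ᵥ v) ≤ 0 := by
    simpa [hZa] using hZ.antitone_state_dotProduct_costate hR hQ (G *ᵥ v) ht.1
  have hZYV : 0 ≤ Z t *ᵥ (G *ᵥ v) ⬝ᵥ (Y t *ᵥ v + V t *ᵥ (G *ᵥ v)) := by
    simpa [hb, hXv, add_mulVec, ← mulVec_mulVec] using
      (h.add_mul hZ G).antitone_state_dotProduct_costate hR hQ v ht.2
  have hYZ : v ⬝ᵥ G *ᵥ v = -(Y t *ᵥ v ⬝ᵥ Z t *ᵥ (G *ᵥ v)) := by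
    have hWt : wronskian X Y Z V t = 1 :=
      (wronskian_eq (fun t => (hR t).isHermitian) (fun t => (hQ t).isHermitian) h hZ t a).trans hW
    calc v ⬝ᵥ G *ᵥ v = v ⬝ᵥ wronskian X Y Z V t *ᵥ (G *ᵥ v) := by rw [hWt, one_mulVec]
      _ = X t *ᵥ v ⬝ᵥ V t *ᵥ (G *ᵥ v) - Y t *ᵥ v ⬝ᵥ Z t *ᵥ (G *ᵥ v) := by
        simp only [wronskian, sub_mulVec, dotProduct_sub, ← mulVec_mulVec _ (_ᵀ),
          dotProduct_mulVec v, vecMul_transpose]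
      _ = -(Y t *ᵥ v ⬝ᵥ Z t *ᵥ (G *ᵥ v)) := by rw [hXv, zero_dotProduct, zero_sub]
  have hGv : 0 < v ⬝ᵥ G *ᵥ v := by simpa using hG.dotProduct_mulVec_pos hv
  rw [dotProduct_add, dotProduct_comm _ (Y t *ᵥ v)] at hZYV
  linarith

theorem hasDerivAt_inv_mul [Finite κ] (h : IsHamiltonianSolution A R Q X Y)
    (hZ : IsHamiltonianSolution A R Q Z V) (hX : wronskian X Y X Y t = 0) (hu : IsUnit (X t)) :
    HasDerivAt (fun t => (X t)⁻¹ * Z t)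
      (-((X t)⁻¹ * R t * ((X t)⁻¹)ᵀ * wronskian X Y Z V t)) t := by
  cases nonempty_fintype κ
  have hdet := (Matrix.isUnit_iff_isUnit_det _).1 hu
  have hinvT : ((X t)⁻¹)ᵀ * (X t)ᵀ = 1 := by
    rw [← transpose_mul, mul_nonsing_inv _ hdet, transpose_one]
  have hYX : ((X t)⁻¹)ᵀ * (Y t)ᵀ = Y t * (X t)⁻¹ :=
    calc ((X t)⁻¹)ᵀ * (Y t)ᵀ = ((X t)⁻¹)ᵀ * ((Y t)ᵀ * X t) * (X t)⁻¹ := by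
          rw [Matrix.mul_assoc, mul_nonsing_inv_cancel_right _ _ hdet]
      _ = ((X t)⁻¹)ᵀ * ((X t)ᵀ * Y t) * (X t)⁻¹ := by rw [sub_eq_zero.1 hX]
      _ = Y t * (X t)⁻¹ := by rw [← Matrix.mul_assoc, hinvT, Matrix.one_mul]
  have hWr : ((X t)⁻¹)ᵀ * wronskian X Y Z V t = V t - Y t * (X t)⁻¹ * Z t := by
    rw [wronskian, Matrix.mul_sub, ← Matrix.mul_assoc, ← Matrix.mul_assoc, hinvT, hYX,
      Matrix.one_mul]
  refine (hasDerivAt_matrix_mul (hasDerivAt_matrix_inv (h.hasDerivAt_state t) hu)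
    (hZ.hasDerivAt_state t)).congr_deriv ?_
  rw [Matrix.mul_assoc _ _ (wronskian X Y Z V t), hWr]
  simp only [Matrix.mul_sub, Matrix.sub_mul, Matrix.neg_mul, Matrix.mul_assoc,
    mul_nonsing_inv_cancel_left _ _ hdet]
  abel

theorem continuousOn_inv_mul_mul_inv_transpose {s : Set ℝ} (h : IsHamiltonianSolution A R Q X Y)
    (hR : Continuous R) (hu : ∀ t ∈ s, IsUnit (X t)) :
    ContinuousOn (fun t => (X t)⁻¹ * R t * ((X t)⁻¹)ᵀ) s := by
  have hinv : ContinuousOn (fun t => (X t)⁻¹) s := fun t ht => by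
    open scoped Matrix.Norms.Operator in
    exact (hasDerivAt_matrix_inv (h.hasDerivAt_state t)
      (hu t ht)).continuousAt.continuousWithinAt
  exact (hinv.mul hR.continuousOn).mul (continuous_id.matrix_transpose.comp_continuousOn hinv)

theorem integral_inv_mul_mul_inv_transpose {Z V : ℝ → Matrix ι ι ℝ} (hR : ∀ t, (R t).IsSymm)
    (hQ : ∀ t, (Q t).IsSymm) (hRc : Continuous R) (h : IsHamiltonianSolution A R Q X Y)
    (hZ : IsHamiltonianSolution A R Q Z V) (hX : wronskian X Y X Y a = 0)
    (hW : wronskian X Y Z V a = 1) (hu : ∀ t ∈ Set.uIcc a b, IsUnit (X t)) :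
    (of fun i j => ∫ s in a..b, ((X s)⁻¹ * R s * ((X s)⁻¹)ᵀ) i j) =
      (X a)⁻¹ * Z a - (X b)⁻¹ * Z b := by
  have hd (t : ℝ) (ht : t ∈ Set.uIcc a b) : HasDerivAt (fun t => (X t)⁻¹ * Z t)
      (-((X t)⁻¹ * R t * ((X t)⁻¹)ᵀ)) t := by
    refine (h.hasDerivAt_inv_mul hZ ?_ (hu t ht)).congr_deriv ?_
    · rw [wronskian_eq hR hQ h h t a, hX]
    · rw [wronskian_eq hR hQ h hZ t a, hW, Matrix.mul_one]
  ext i j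
  have hc := (continuous_id.matrix_elem i j).comp_continuousOn
    (h.continuousOn_inv_mul_mul_inv_transpose hRc hu)
  have hFTC := intervalIntegral.integral_eq_sub_of_hasDerivAt
    (fun t ht => hasDerivAt_matrix.1 (hd t ht) i j) hc.neg.intervalIntegrable
  simp only [Matrix.neg_apply, intervalIntegral.integral_neg] at hFTC
  rw [of_apply, Matrix.sub_apply, ← neg_sub, ← hFTC, neg_neg]

end IsHamiltonianSolution

end Hamiltonian

theorem mul_mul_eq_iff_eq_inv_mul_mul_inv {ι α : Type*} [Fintype ι] [DecidableEq ι] [CommRing α]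
    {U V M N : Matrix ι ι α} (hU : IsUnit U) (hV : IsUnit V) :
    U * M * V = N ↔ M = U⁻¹ * N * V⁻¹ := by
  rw [Matrix.isUnit_iff_isUnit_det] at hU hV
  constructor <;> rintro rfl <;> simp only [Matrix.mul_assoc, mul_nonsing_inv_cancel_left _ _ hU,
    nonsing_inv_mul_cancel_left _ _ hU, mul_nonsing_inv _ hV, nonsing_inv_mul _ hV, Matrix.mul_one]

section Riccati

open scoped ComplexOrder MatrixOrder Matrix.Norms.L2Operator

variable {ι 𝕜 : Type*} [Fintype ι] [DecidableEq ι] [RCLike 𝕜] {G H K S T : Matrix ι ι 𝕜}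

theorem posDef_iff_forall_spectrum_pos (hH : H.IsHermitian) :
    H.PosDef ↔ ∀ μ ∈ spectrum ℝ H, 0 < μ :=
  isStrictlyPositive_iff_posDef.symm.trans
    (StarOrderedRing.isStrictlyPositive_iff_spectrum_pos H hH)

theorem posDef_sub_smul_one {c : ℝ} (hK : K.PosSemidef)
    (hKc : (K * K - (c * c) • (1 : Matrix ι ι 𝕜)).PosDef) :
    (K - c • (1 : Matrix ι ι 𝕜)).PosDef := by
  have hherm : (K - c • (1 : Matrix ι ι 𝕜)).IsHermitian :=
    IsSelfAdjoint.sub hK.isHermitian (isHermitian_one.smul (.all c))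
  simp only [← Algebra.algebraMap_eq_smul_one] at hKc hherm ⊢
  rw [posDef_iff_forall_spectrum_pos hherm, ← spectrum.sub_singleton_eq, Set.sub_singleton]
  rintro _ ⟨μ, hμ, rfl⟩
  have hμ₀ : 0 ≤ μ := spectrum_nonneg_of_nonneg hK.nonneg hμ
  have hsq : μ ^ 2 - c * c ∈ spectrum ℝ (K * K - algebraMap ℝ _ (c * c)) := by
    rw [← spectrum.sub_singleton_eq, ← pow_two K]
    exact Set.sub_mem_sub (spectrum.pow_mem_pow K 2 hμ) rfl
  have hpos := (posDef_iff_forall_spectrum_pos hKc.isHermitian).1 hKc _ hsq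
  exact sub_pos.2 (lt_of_pow_lt_pow_left₀ 2 hμ₀ (by linarith))

theorem posDef_and_mul_self_add_self_eq_iff (hT : T.PosDef) (hK : K.PosSemidef)
    (hKT : K * K = (1 / 4 : ℝ) • (1 : Matrix ι ι 𝕜) + T) :
    H.PosDef ∧ H * H + H = T ↔ H = K - (1 / 2 : ℝ) • (1 : Matrix ι ι 𝕜) := by
  constructor
  · rintro ⟨hH, rfl⟩
    have hH' : (H + (1 / 2 : ℝ) • (1 : Matrix ι ι 𝕜)).PosSemidef :=
      hH.posSemidef.add (PosSemidef.one.smul (by norm_num))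
    refine eq_sub_of_add_eq ((CFC.mul_self_eq_mul_self_iff _ K hH'.nonneg hK.nonneg).1 ?_)
    rw [hKT]
    simp only [add_mul, mul_add, smul_mul_assoc, mul_smul_comm, one_mul, mul_one]
    module
  · rintro rfl
    refine ⟨posDef_sub_smul_one hK ?_, ?_⟩
    · convert hT using 1
      rw [hKT]
      module
    · simp only [sub_mul, mul_sub, smul_mul_assoc, mul_smul_comm, one_mul, mul_one, hKT]
      module

theorem posDef_and_riccati_iff (hS : S.PosDef) (hT : T.PosDef) (hK : K.PosSemidef)
    (hKT : K * K = (1 / 4 : ℝ) • (1 : Matrix ι ι 𝕜) + S * T * S) :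
    G.PosDef ∧ G * (S * S) * G + G = T ↔ G = S⁻¹ * K * S⁻¹ - (1 / 2 : ℝ) • (S * S)⁻¹ := by
  have conj_posDef_iff (M : Matrix ι ι 𝕜) : (S * M * S).PosDef ↔ M.PosDef := by
    simpa only [star_eq_conjTranspose, hS.isHermitian.eq] using
      IsUnit.posDef_star_left_conjugate_iff hS.isUnit (x := M)
  have conj_quadratic : S * G * S * (S * G * S) + S * G * S = S * (G * (S * S) * G + G) * S := by
    noncomm_ring
  have conj_root : S⁻¹ * (K - (1 / 2 : ℝ) • (1 : Matrix ι ι 𝕜)) * S⁻¹ =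
      S⁻¹ * K * S⁻¹ - (1 / 2 : ℝ) • (S * S)⁻¹ := by
    simp only [Matrix.mul_sub, Matrix.sub_mul, Matrix.mul_smul, Matrix.smul_mul, Matrix.mul_one,
      Matrix.mul_inv_rev]
  rw [← conj_root, ← mul_mul_eq_iff_eq_inv_mul_mul_inv hS.isUnit hS.isUnit,
    ← posDef_and_mul_self_add_self_eq_iff ((conj_posDef_iff T).2 hT) hK hKT,
    conj_posDef_iff, conj_quadratic, hS.isUnit.mul_left_inj, hS.isUnit.mul_right_inj]

end Riccati

section Steering

variable {ι : Type*} [Fintype ι] {A R Q : ℝ → Matrix ι ι ℝ}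
  {Φ : ℝ → ℝ → Matrix (ι ⊕ ι) (ι ⊕ ι) ℝ} {G P : Matrix ι ι ℝ} {a b : ℝ}

/-- The coefficient matrix `M(t)` of the linear Hamiltonian system of `IsHamiltonianSolution`, with
state and costate stacked into one vector. -/
def hamiltonianMatrix (A R Q : ℝ → Matrix ι ι ℝ) (t : ℝ) : Matrix (ι ⊕ ι) (ι ⊕ ι) ℝ :=
  fromBlocks (A t) (-(R t)) (-(Q t)) (-(A t)ᵀ)

/-- The closed-loop transition matrix `Φ_P(t, a) = Φ₁₁(t, a) + Φ₁₂(t, a) P`: the state, at time `t`,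
of the Hamiltonian solution that has state `1` and costate `P` at time `a`. -/
def closedLoop (Φ : ℝ → ℝ → Matrix (ι ⊕ ι) (ι ⊕ ι) ℝ) (a : ℝ) (P : Matrix ι ι ℝ) (t : ℝ) :
    Matrix ι ι ℝ :=
  (Φ t a).toBlocks₁₁ + (Φ t a).toBlocks₁₂ * P

/-- The costate `Φ₂₁(t, a) + Φ₂₂(t, a) P` that belongs to the state `closedLoop Φ a P t`. -/
def closedLoopCostate (Φ : ℝ → ℝ → Matrix (ι ⊕ ι) (ι ⊕ ι) ℝ) (a : ℝ) (P : Matrix ι ι ℝ) (t : ℝ) :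
    Matrix ι ι ℝ :=
  (Φ t a).toBlocks₂₁ + (Φ t a).toBlocks₂₂ * P

theorem closedLoop_add : closedLoop Φ a (P + G) b =
    closedLoop Φ a P b + (Φ b a).toBlocks₁₂ * G := by
  rw [closedLoop, closedLoop, Matrix.mul_add, add_assoc]

theorem closedLoop_neg_inv_mul [DecidableEq ι] (hF : IsUnit (Φ b a).toBlocks₁₂) :
    closedLoop Φ a (-(((Φ b a).toBlocks₁₂)⁻¹ * (Φ b a).toBlocks₁₁)) b = 0 := by
  rw [closedLoop, Matrix.mul_neg,
    mul_nonsing_inv_cancel_left _ _ ((Matrix.isUnit_iff_isUnit_det _).1 hF), add_neg_cancel]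

namespace IsSTM

variable [DecidableEq ι] {M : ℝ → Matrix (ι ⊕ ι) (ι ⊕ ι) ℝ}

theorem toBlocks₁₂_self (hΦ : IsSTM M Φ) (a : ℝ) : (Φ a a).toBlocks₁₂ = 0 := by
  rw [hΦ.1, ← fromBlocks_one, toBlocks_fromBlocks₁₂]

theorem closedLoop_self (hΦ : IsSTM M Φ) (a : ℝ) (P : Matrix ι ι ℝ) : closedLoop Φ a P a = 1 := by
  rw [closedLoop, hΦ.1, ← fromBlocks_one, toBlocks_fromBlocks₁₁, toBlocks_fromBlocks₁₂,
    Matrix.zero_mul, add_zero]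

theorem closedLoopCostate_self (hΦ : IsSTM M Φ) (a : ℝ) (P : Matrix ι ι ℝ) :
    closedLoopCostate Φ a P a = P := by
  rw [closedLoopCostate, hΦ.1, ← fromBlocks_one, toBlocks_fromBlocks₂₁, toBlocks_fromBlocks₂₂,
    Matrix.one_mul, zero_add]

theorem wronskian_closedLoop_self (hΦ : IsSTM M Φ) (a : ℝ) (P : Matrix ι ι ℝ) :
    wronskian (closedLoop Φ a P) (closedLoopCostate Φ a P) (closedLoop Φ a P)
      (closedLoopCostate Φ a P) a = P - Pᵀ := by
  rw [wronskian, hΦ.closedLoop_self, hΦ.closedLoopCostate_self, transpose_one, Matrix.one_mul,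
    Matrix.mul_one]

theorem wronskian_closedLoop_toBlocks₁₂ (hΦ : IsSTM M Φ) (a : ℝ) (P : Matrix ι ι ℝ) :
    wronskian (closedLoop Φ a P) (closedLoopCostate Φ a P) (fun t => (Φ t a).toBlocks₁₂)
      (fun t => (Φ t a).toBlocks₂₂) a = 1 := by
  rw [wronskian, hΦ.closedLoop_self, hΦ.1, ← fromBlocks_one, toBlocks_fromBlocks₂₂,
    toBlocks_fromBlocks₁₂, transpose_one, Matrix.one_mul, Matrix.mul_zero, sub_zero]

theorem isHamiltonianSolution_blocks (hΦ : IsSTM (hamiltonianMatrix A R Q) Φ) (a : ℝ) :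
    IsHamiltonianSolution A R Q (fun t => (Φ t a).toBlocks₁₁) (fun t => (Φ t a).toBlocks₂₁) ∧
    IsHamiltonianSolution A R Q (fun t => (Φ t a).toBlocks₁₂) (fun t => (Φ t a).toBlocks₂₂) := by
  have blocks (t : ℝ) : hamiltonianMatrix A R Q t * Φ t a =
      fromBlocks (A t * (Φ t a).toBlocks₁₁ - R t * (Φ t a).toBlocks₂₁)
        (A t * (Φ t a).toBlocks₁₂ - R t * (Φ t a).toBlocks₂₂)
        (-(Q t * (Φ t a).toBlocks₁₁) - (A t)ᵀ * (Φ t a).toBlocks₂₁)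
        (-(Q t * (Φ t a).toBlocks₁₂) - (A t)ᵀ * (Φ t a).toBlocks₂₂) := by
    conv_lhs => rw [← fromBlocks_toBlocks (Φ t a), hamiltonianMatrix, fromBlocks_multiply]
    simp only [Matrix.neg_mul, sub_eq_add_neg]
  have hd := hΦ.2 a
  simp only [blocks] at hd
  exact ⟨⟨fun t => hasDerivAt_matrix.2 fun i j => hd t (.inl i) (.inl j),
      fun t => hasDerivAt_matrix.2 fun i j => hd t (.inr i) (.inl j)⟩,
    ⟨fun t => hasDerivAt_matrix.2 fun i j => hd t (.inl i) (.inr j),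
      fun t => hasDerivAt_matrix.2 fun i j => hd t (.inr i) (.inr j)⟩⟩

theorem isHamiltonianSolution_closedLoop (hΦ : IsSTM (hamiltonianMatrix A R Q) Φ) (a : ℝ)
    (P : Matrix ι ι ℝ) :
    IsHamiltonianSolution A R Q (closedLoop Φ a P) (closedLoopCostate Φ a P) :=
  (hΦ.isHamiltonianSolution_blocks a).1.add_mul (hΦ.isHamiltonianSolution_blocks a).2 P

theorem isSymm_of_closedLoop_eq_zero (hΦ : IsSTM (hamiltonianMatrix A R Q) Φ)
    (hR : ∀ t, (R t).IsSymm) (hQ : ∀ t, (Q t).IsSymm) (hb : closedLoop Φ a P b = 0) :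
    P.IsSymm := by
  have h := hΦ.isHamiltonianSolution_closedLoop a P
  have hW := IsHamiltonianSolution.wronskian_eq hR hQ h h a b
  rw [hΦ.wronskian_closedLoop_self, wronskian, hb, transpose_zero, Matrix.zero_mul,
    Matrix.mul_zero, sub_zero] at hW
  exact (sub_eq_zero.1 hW).symm

theorem isUnit_closedLoop {t : ℝ} (hΦ : IsSTM (hamiltonianMatrix A R Q) Φ)
    (hR : ∀ t, (R t).PosSemidef) (hQ : ∀ t, (Q t).PosSemidef) (hG : G.PosDef)
    (hb : closedLoop Φ a (P + G) b = 0) (ht : t ∈ Set.Icc a b) : IsUnit (closedLoop Φ a P t) :=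
  IsHamiltonianSolution.isUnit_state hR hQ (hΦ.isHamiltonianSolution_closedLoop a P)
    (hΦ.isHamiltonianSolution_blocks a).2 (hΦ.toBlocks₁₂_self a)
    (hΦ.wronskian_closedLoop_toBlocks₁₂ a P) hG (closedLoop_add.symm.trans hb) ht

theorem integral_closedLoop (hΦ : IsSTM (hamiltonianMatrix A R Q) Φ) (hab : a ≤ b)
    (hR : ∀ t, (R t).PosSemidef) (hQ : ∀ t, (Q t).PosSemidef) (hRc : Continuous R)
    (hG : G.PosDef) (hb : closedLoop Φ a (P + G) b = 0) :
    (of fun i j => ∫ s in a..b,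
        ((closedLoop Φ a P s)⁻¹ * R s * ((closedLoop Φ a P s)⁻¹)ᵀ) i j) =
      -((closedLoop Φ a P b)⁻¹ * (Φ b a).toBlocks₁₂) := by
  have hRs (t : ℝ) : (R t).IsSymm := (hR t).isHermitian
  have hQs (t : ℝ) : (Q t).IsSymm := (hQ t).isHermitian
  have hP : P.IsSymm := by
    simpa using (hΦ.isSymm_of_closedLoop_eq_zero hRs hQs hb).sub
      (isHermitian_iff_isSymm.1 hG.isHermitian)
  have hu (t : ℝ) (ht : t ∈ Set.uIcc a b) : IsUnit (closedLoop Φ a P t) :=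
    hΦ.isUnit_closedLoop hR hQ hG hb (Set.uIcc_of_le hab ▸ ht)
  have hW₀ := (hΦ.wronskian_closedLoop_self a P).trans (sub_eq_zero.2 hP.eq.symm)
  rw [IsHamiltonianSolution.integral_inv_mul_mul_inv_transpose hRs hQs hRc
    (hΦ.isHamiltonianSolution_closedLoop a P) (hΦ.isHamiltonianSolution_blocks a).2 hW₀
    (hΦ.wronskian_closedLoop_toBlocks₁₂ a P) hu, hΦ.toBlocks₁₂_self, Matrix.mul_zero, zero_sub]

theorem steerMap_eq {n q : ℕ} {A R Q : ℝ → Matrix (Fin n) (Fin n) ℝ}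
    {Φ : ℝ → ℝ → Matrix (Fin n ⊕ Fin n) (Fin n ⊕ Fin n) ℝ} {C : ℝ → Matrix (Fin n) (Fin q) ℝ}
    {D : ℝ → Matrix (Fin q) (Fin q) ℝ} {G P : Matrix (Fin n) (Fin n) ℝ}
    (hΦ : IsSTM (hamiltonianMatrix A R Q) Φ) (hR : ∀ t, (R t).PosSemidef)
    (hQ : ∀ t, (Q t).PosSemidef) (hRc : Continuous R)
    (hCD : ∀ t ∈ Set.Icc (0 : ℝ) 1, C t * D t * (C t)ᵀ = R t) (hG : G.PosDef)
    (hP : closedLoop Φ 0 (P + G) 1 = 0) (Sig0 : Matrix (Fin n) (Fin n) ℝ) :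
    steerMap Φ C D Sig0 P =
      (Φ 1 0).toBlocks₁₂ * (G * Sig0 * G + G) * ((Φ 1 0).toBlocks₁₂)ᵀ := by
  set X := closedLoop Φ 0 P
  set F := (Φ 1 0).toBlocks₁₂
  have hX₁ : X 1 = -(F * G) := eq_neg_of_add_eq_zero_left (closedLoop_add.symm.trans hP)
  have hdet := (Matrix.isUnit_iff_isUnit_det _).1
    (hΦ.isUnit_closedLoop hR hQ hG hP (Set.right_mem_Icc.2 zero_le_one))
  have integrand (s : ℝ) (hs : s ∈ Set.uIcc (0 : ℝ) 1) :
      (X s)⁻¹ * (C s * D s * (C s)ᵀ) * ((X s)⁻¹)ᵀ = (X s)⁻¹ * R s * ((X s)⁻¹)ᵀ := by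
    rw [hCD s (Set.uIcc_of_le (zero_le_one' ℝ) ▸ hs)]
  have gramian : (of fun i j => ∫ s in (0 : ℝ)..1,
      ((X s)⁻¹ * (C s * D s * (C s)ᵀ) * ((X s)⁻¹)ᵀ) i j) = -((X 1)⁻¹ * F) := by
    rw [← hΦ.integral_closedLoop zero_le_one hR hQ hRc hG hP]
    ext i j
    exact intervalIntegral.integral_congr fun s hs => congrFun₂ (integrand s hs) i j
  calc steerMap Φ C D Sig0 P = X 1 * (Sig0 + -((X 1)⁻¹ * F)) * (X 1)ᵀ := by rw [← gramian]; rfl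
    _ = (X 1 * Sig0 - F) * (X 1)ᵀ := by
      rw [← sub_eq_add_neg, Matrix.mul_sub, mul_nonsing_inv_cancel_left _ _ hdet]
    _ = F * (G * Sig0 * G + G) * Fᵀ := by
      rw [hX₁, transpose_neg, transpose_mul, (isHermitian_iff_isSymm.1 hG.isHermitian).eq]
      noncomm_ring

end IsSTM

end Steering

theorem stmt_13_general {n q : ℕ} {A R Q : ℝ → Matrix (Fin n) (Fin n) ℝ}
    {C : ℝ → Matrix (Fin n) (Fin q) ℝ} {D : ℝ → Matrix (Fin q) (Fin q) ℝ}
    {Φ : ℝ → ℝ → Matrix (Fin n ⊕ Fin n) (Fin n ⊕ Fin n) ℝ}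
    {F L P Sig0 Sig1 S K : Matrix (Fin n) (Fin n) ℝ}
    (hΦ : IsSTM (hamiltonianMatrix A R Q) Φ) (hR : ∀ t, (R t).PosSemidef)
    (hQ : ∀ t, (Q t).PosSemidef) (hRc : Continuous R)
    (hCD : ∀ t ∈ Set.Icc (0 : ℝ) 1, C t * D t * (C t)ᵀ = R t)
    (hF : F = (Φ 1 0).toBlocks₁₂) (hFu : IsUnit F) (hL : L = -(F⁻¹ * (Φ 1 0).toBlocks₁₁))
    (hSig0 : Sig0.PosDef) (hSig1 : Sig1.PosDef) (hS : S.PosSemidef) (hSsq : S * S = Sig0)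
    (hK : K.PosSemidef) (hKsq : K * K = (1 / 4 : ℝ) • (1 : Matrix (Fin n) (Fin n) ℝ) +
      S * F⁻¹ * Sig1 * (F⁻¹)ᵀ * S) :
    P.IsSymm ∧ (L - P).PosDef ∧ steerMap Φ C D Sig0 P = Sig1 ↔
      P = L + (1 / 2 : ℝ) • Sig0⁻¹ - S⁻¹ * K * S⁻¹ := by
  have hLb : closedLoop Φ 0 L 1 = 0 := by
    subst hF hL
    exact closedLoop_neg_inv_mul hFu
  have hsymm (hG : (L - P).PosDef) : P.IsSymm := by
    have hLs := hΦ.isSymm_of_closedLoop_eq_zero (fun t => (hR t).isHermitian)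
      (fun t => (hQ t).isHermitian) hLb
    simpa using hLs.sub (isHermitian_iff_isSymm.1 hG.isHermitian)
  have hsteer (hG : (L - P).PosDef) : steerMap Φ C D Sig0 P = Sig1 ↔
      (L - P) * Sig0 * (L - P) + (L - P) = F⁻¹ * Sig1 * (F⁻¹)ᵀ := by
    rw [hΦ.steerMap_eq hR hQ hRc hCD hG (by rwa [add_sub_cancel]), ← hF, transpose_nonsing_inv,
      mul_mul_eq_iff_eq_inv_mul_mul_inv hFu ((isUnit_transpose F).2 hFu)]
  have hT : (F⁻¹ * Sig1 * (F⁻¹)ᵀ).PosDef :=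
    (IsUnit.posDef_star_right_conjugate_iff (isUnit_nonsing_inv_iff.2 hFu)).2 hSig1
  have hSpd : S.PosDef := hS.posDef_iff_isUnit.2 (isUnit_of_mul_isUnit_left (hSsq ▸ hSig0.isUnit))
  have hroot := posDef_and_riccati_iff (G := L - P) hSpd hT hK
    (by simpa only [Matrix.mul_assoc] using hKsq)
  have hP : P = L + (1 / 2 : ℝ) • Sig0⁻¹ - S⁻¹ * K * S⁻¹ ↔
      L - P = S⁻¹ * K * S⁻¹ - (1 / 2 : ℝ) • Sig0⁻¹ :=
    ⟨by rintro rfl; abel, fun h => by rw [← sub_sub_self L P, h]; abel⟩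
  rw [hP, ← hSsq, ← hroot, hSsq]
  exact ⟨fun ⟨_, hG, hf⟩ => ⟨hG, (hsteer hG).1 hf⟩,
    fun ⟨hG, hf⟩ => ⟨hsymm hG, hG, (hsteer hG).2 hf⟩⟩

theorem stmt_13 {n p q : ℕ} (hn : 1 ≤ n) (hp : 1 ≤ p) (hq : 1 ≤ q)
    (A Q : ℝ → Matrix (Fin n) (Fin n) ℝ) (B : ℝ → Matrix (Fin n) (Fin p) ℝ)
    (C : ℝ → Matrix (Fin n) (Fin q) ℝ) (D : ℝ → Matrix (Fin q) (Fin q) ℝ)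
    (hA : Continuous A) (hB : Continuous B) (hQ : Continuous Q)
    (hC : Continuous C) (hD : Continuous D)
    (hQpsd : ∀ t, (Q t).PosSemidef) (hDpsd : ∀ t, (D t).PosSemidef)
    (hAsm : ∀ i j, ContDiff ℝ (n - 1 : ℕ) fun t => A t i j)
    (hBsm : ∀ i j, ContDiff ℝ (n : ℕ) fun t => B t i j)
    (Γ : ℕ → ℝ → Matrix (Fin n) (Fin p) ℝ)
    (hΓ : IsCtrbMatSeq A B Γ)
    (hTC : TotallyControllable Γ)
    (Φ : ℝ → ℝ → Matrix (Fin n ⊕ Fin n) (Fin n ⊕ Fin n) ℝ)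
    (hΦ : IsSTM (fun t => fromBlocks (A t) (-(B t * (B t)ᵀ)) (-(Q t)) (-(A t)ᵀ)) Φ)
    (hΦ12 : IsUnit ((Φ 1 0).toBlocks₁₂))
    (hCD : ∀ t ∈ Set.Icc (0:ℝ) 1, C t * D t * (C t)ᵀ = B t * (B t)ᵀ)
    (Sig0 Sig1 : Matrix (Fin n) (Fin n) ℝ) (hSig0 : Sig0.PosDef) (hSig1 : Sig1.PosDef)
    -- `S` is the positive semidefinite square root of `Σ₀` and `K` that of
    -- `(1/4)Iₙ + Σ₀^{1/2} Φ₁₂(1,0)⁻¹ Σ₁ Φ₁₂(1,0)⁻ᵀ Σ₀^{1/2}`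
    (S K : Matrix (Fin n) (Fin n) ℝ)
    (hSpsd : S.PosSemidef) (hSsq : S * S = Sig0)
    (hKpsd : K.PosSemidef)
    (hKsq : K * K = (1/4 : ℝ) • (1 : Matrix (Fin n) (Fin n) ℝ) +
      S * ((Φ 1 0).toBlocks₁₂)⁻¹ * Sig1 * (((Φ 1 0).toBlocks₁₂)⁻¹)ᵀ * S)
    (P₀ : Matrix (Fin n) (Fin n) ℝ)
    (hP₀ : P₀ = -(((Φ 1 0).toBlocks₁₂)⁻¹ * (Φ 1 0).toBlocks₁₁) +
      (1/2 : ℝ) • Sig0⁻¹ - S⁻¹ * K * S⁻¹) :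
    P₀ᵀ = P₀ ∧
    (-(((Φ 1 0).toBlocks₁₂)⁻¹ * (Φ 1 0).toBlocks₁₁) - P₀).PosDef ∧
    steerMap Φ C D Sig0 P₀ = Sig1 ∧
    ∀ P' : Matrix (Fin n) (Fin n) ℝ, P'ᵀ = P' →
      (-(((Φ 1 0).toBlocks₁₂)⁻¹ * (Φ 1 0).toBlocks₁₁) - P').PosDef →
      steerMap Φ C D Sig0 P' = Sig1 → P' = P₀ := by
  have h {P : Matrix (Fin n) (Fin n) ℝ} := stmt_13_general (P := P) hΦ
    (fun t => by simpa using posSemidef_self_mul_conjTranspose (B t)) hQpsd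
    (hB.matrix_mul hB.matrix_transpose) hCD rfl hΦ12 rfl hSig0 hSig1 hSpsd hSsq hKpsd hKsq
  exact ⟨(h.2 hP₀).1, (h.2 hP₀).2.1, (h.2 hP₀).2.2,
    fun P' hP' hlt hf => (h.1 ⟨hP', hlt, hf⟩).trans hP₀.symm⟩
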